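/- (Northeast Lemma) Let G be a finite simple graph on n vertices and suppose there exists A ∈ S(G) with exactly p positive eigenvalues and exactly q negative eigenvalues (counted with multiplicity). Then for all nonnegative integers s and t with (p + s) + (q + t) ≤ n, there exists A' ∈ S(G) with exactly p + s positive eigenvalues and exactly q + t negative eigenvalues. -/

import Mathlib

/-- The number of positive eigenvalues (with multiplicity) of a Hermitian matrix. -/
noncomputable def posEigCount {n : Type*} [Fintype n] [DecidableEq n]
    {A : Matrix n n ℂ} (hA : A.IsHermitian) : ℕ :=
  Fintype.card {i // 0 < hA.eigenvalues i}

/-- The number of negative eigenvalues (with multiplicity) of a Hermitian matrix. -/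
noncomputable def negEigCount {n : Type*} [Fintype n] [DecidableEq n]
    {A : Matrix n n ℂ} (hA : A.IsHermitian) : ℕ :=
  Fintype.card {i // hA.eigenvalues i < 0}

/-!
The number of positive (negative) eigenvalues of a Hermitian matrix `A` is the largest dimension of
a subspace on which the form `x ↦ x* A x` is positive (negative) definite. If `A` has fewer than
`n` nonzero eigenvalues, it has a kernel vector `x ≠ 0`; choose `k` with `x k ≠ 0`. Adding `1` to
the diagonal entry at `k` adds `|v k|²` to the form at `v`. Adjoining `x` to a positive definite
subspace for `A` gives one for the new form, and moving a negative definite subspace along `x` into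
the hyperplane `v k = 0` preserves its negativity, so exactly one new positive eigenvalue appears
and no negative one is lost. Negative eigenvalues are created by the same step applied to `-A`.
-/

open Matrix Module

section PosIndex

variable {K M N : Type*} [Field K] [AddCommGroup M] [Module K M] [AddCommGroup N] [Module K N]

variable (K) in
/-- The positive index of a function `q : M → ℝ` (in practice, a quadratic or Hermitian form): the
largest dimension of a subspace on whose nonzero vectors `q` is positive. It is meaningful when `M`
is finite-dimensional; otherwise the supremum may be the junk value `0`. The negative index of `q`
is `posIndex K (-q)`. -/
noncomputable def posIndex (q : M → ℝ) : ℕ :=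
  sSup {r | ∃ W : Submodule K M, finrank K W = r ∧ ∀ x ∈ W, x ≠ 0 → 0 < q x}

theorem posIndex_isGreatest [FiniteDimensional K M] (q : M → ℝ) :
    IsGreatest {r | ∃ W : Submodule K M, finrank K W = r ∧ ∀ x ∈ W, x ≠ 0 → 0 < q x}
      (posIndex K q) := by
  have bounded : BddAbove
      {r | ∃ W : Submodule K M, finrank K W = r ∧ ∀ x ∈ W, x ≠ 0 → 0 < q x} :=
    ⟨finrank K M, by rintro _ ⟨W, rfl, -⟩; exact W.finrank_le⟩
  refine ⟨Nat.sSup_mem ⟨0, ⊥, finrank_bot K M, ?_⟩ bounded, fun _ hr => le_csSup bounded hr⟩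
  exact fun x hx hx0 => absurd ((Submodule.mem_bot K).mp hx) hx0

theorem exists_finrank_eq_posIndex [FiniteDimensional K M] (q : M → ℝ) :
    ∃ W : Submodule K M, finrank K W = posIndex K q ∧ ∀ x ∈ W, x ≠ 0 → 0 < q x :=
  (posIndex_isGreatest q).1

theorem finrank_le_posIndex [FiniteDimensional K M] {q : M → ℝ} (W : Submodule K M)
    (hW : ∀ x ∈ W, x ≠ 0 → 0 < q x) : finrank K W ≤ posIndex K q :=
  (posIndex_isGreatest q).2 ⟨W, rfl, hW⟩

theorem finrank_le_posIndex_of_linearMap [FiniteDimensional K M] {q : M → ℝ} (hq : q 0 = 0)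
    (f : N →ₗ[K] M) (hf : ∀ y ≠ 0, 0 < q (f y)) : finrank K N ≤ posIndex K q := by
  have f_injective : Function.Injective f := by
    refine (injective_iff_map_eq_zero f).mpr fun y hy => by_contra fun hy0 => ?_
    simpa [hy, hq] using hf y hy0
  rw [← LinearMap.finrank_range_of_inj f_injective]
  refine finrank_le_posIndex _ ?_
  rintro _ ⟨y, rfl⟩ hy
  exact hf y fun hy0 => hy (by rw [hy0, map_zero])

theorem posIndex_le_posIndex_of_le_comp [FiniteDimensional K M] [FiniteDimensional K N]
    {q : M → ℝ} {q' : N → ℝ} (hq' : q' 0 = 0) (f : M →ₗ[K] N) (hf : ∀ x, q x ≤ q' (f x)) :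
    posIndex K q ≤ posIndex K q' := by
  obtain ⟨W, hW, hpos⟩ := exists_finrank_eq_posIndex (K := K) q
  rw [← hW]
  exact finrank_le_posIndex_of_linearMap hq' (f ∘ₗ W.subtype) fun y hy =>
    (hpos y y.2 (by simpa using hy)).trans_le (hf y)

theorem posIndex_add_finrank_le_of_nonpos [FiniteDimensional K M] {q : M → ℝ}
    (W : Submodule K M) (hW : ∀ x ∈ W, q x ≤ 0) :
    posIndex K q + finrank K W ≤ finrank K M := by
  obtain ⟨P, hP, hpos⟩ := exists_finrank_eq_posIndex (K := K) q
  rw [← hP]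
  refine Submodule.finrank_add_finrank_le_of_disjoint (Submodule.disjoint_def.mpr ?_)
  intro x hxP hxW
  by_contra hx
  exact (hpos x hxP hx).not_ge (hW x hxW)

end PosIndex

section NormedField

variable {K M : Type*} [NormedField K] [AddCommGroup M] [Module K M] [FiniteDimensional K M]

theorem posIndex_weighted_sum_sq {ι : Type*} [Fintype ι] (w : ι → ℝ) :
    posIndex K (fun x : ι → K => ∑ i, w i * ‖x i‖ ^ 2) = {i | 0 < w i}.ncard := by
  apply le_antisymm
  · have nonpos : ∀ x ∈ Pi.spanSubset K {i | 0 < w i}ᶜ, ∑ i, w i * ‖x i‖ ^ 2 ≤ 0 := by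
      refine fun x hx => Finset.sum_nonpos fun i _ => ?_
      by_cases hi : 0 < w i
      · simp [Pi.mem_spanSubset_iff.mp hx i (by simpa using hi)]
      · exact mul_nonpos_of_nonpos_of_nonneg (not_lt.mp hi) (sq_nonneg _)
    have card_add := Set.ncard_add_ncard_compl {i | 0 < w i}
    have index_add := posIndex_add_finrank_le_of_nonpos _ nonpos
    rw [Pi.dim_spanSubset, finrank_fintype_fun_eq_card, ← Nat.card_eq_fintype_card] at index_add
    lia
  · rw [← Pi.dim_spanSubset (R := K)]
    refine finrank_le_posIndex _ fun x hx hx0 => ?_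
    have eq_zero : ∀ i, ¬ 0 < w i → x i = 0 := Pi.mem_spanSubset_iff.mp hx
    obtain ⟨j, hj⟩ := Function.ne_iff.mp hx0
    refine Finset.sum_pos' (fun i _ => ?_) ⟨j, Finset.mem_univ j, ?_⟩
    · by_cases hi : 0 < w i
      · positivity
      · simp [eq_zero i hi]
    · exact mul_pos (not_imp_comm.mp (eq_zero j) hj) (pow_pos (norm_pos_iff.mpr hj) 2)

theorem posIndex_add_norm_sq_le (q : M → ℝ) (hq : q 0 = 0) (φ : M →ₗ[K] K) :
    posIndex K (fun v => q v + ‖φ v‖ ^ 2) ≤ posIndex K q + 1 := by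
  obtain ⟨W, hW, hpos⟩ := exists_finrank_eq_posIndex (K := K) fun v => q v + ‖φ v‖ ^ 2
  let ψ : W →ₗ[K] K := φ ∘ₗ W.subtype
  have finrank_ker_le : finrank K ψ.ker ≤ posIndex K q := by
    refine finrank_le_posIndex_of_linearMap hq (W.subtype ∘ₗ ψ.ker.subtype) fun y hy => ?_
    have hφy : φ y = 0 := y.2
    simpa [hφy] using hpos y y.1.2 (by simpa using hy)
  have finrank_range_le : finrank K ψ.range ≤ 1 := by
    simpa using ψ.range.finrank_le
  have := ψ.finrank_range_add_finrank_ker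
  lia

section Kernel

variable {q : M → ℝ} {x : M} (hq : q 0 = 0) (hx : ∀ v, ∀ c : K, q (v + c • x) = q v)
  {φ : M →ₗ[K] K} (hφ : φ x ≠ 0)

include hq hx hφ

theorem posIndex_add_norm_sq :
    posIndex K (fun v => q v + ‖φ v‖ ^ 2) = posIndex K q + 1 := by
  refine (posIndex_add_norm_sq_le q hq φ).antisymm ?_
  obtain ⟨W, hW, hpos⟩ := exists_finrank_eq_posIndex (K := K) q
  let f : W × K →ₗ[K] M := W.subtype.coprod (LinearMap.toSpanSingleton K M x)
  have hf : ∀ y ≠ 0, 0 < q (f y) + ‖φ (f y)‖ ^ 2 := by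
    rintro ⟨v, c⟩ hvc
    have q_f : q (f (v, c)) = q v := hx v c
    rw [q_f]
    obtain rfl | hv := eq_or_ne v 0
    · have hc : c ≠ 0 := fun hc => hvc (by rw [hc, Prod.mk_zero_zero])
      have φ_f : φ (f (0, c)) = c * φ x := by simp [f]
      rw [Submodule.coe_zero, hq, zero_add, φ_f]
      exact pow_pos (norm_pos_iff.mpr (mul_ne_zero hc hφ)) 2
    · exact add_pos_of_pos_of_nonneg (hpos v v.2 (by simpa using hv)) (sq_nonneg _)
  simpa [hW] using finrank_le_posIndex_of_linearMap (by simp [hq]) f hf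

theorem posIndex_neg_add_norm_sq :
    posIndex K (-fun v => q v + ‖φ v‖ ^ 2) = posIndex K (-q) := by
  apply le_antisymm
  · refine posIndex_le_posIndex_of_le_comp (by simp [hq]) LinearMap.id fun v => ?_
    simp
  · -- Project along `x` onto the kernel of `φ`, where the two forms agree.
    let π : M →ₗ[K] M := LinearMap.id - LinearMap.toSpanSingleton K M x ∘ₗ ((φ x)⁻¹ • φ)
    have φ_π : ∀ v, φ (π v) = 0 := fun v => by simp [π, mul_right_comm, hφ]
    have q_π : ∀ v, q (π v) = q v := fun v => by
      simpa [π, sub_eq_add_neg] using hx v (-((φ x)⁻¹ * φ v))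
    refine posIndex_le_posIndex_of_le_comp (by simp [hq]) π fun v => ?_
    simp [φ_π, q_π]

end Kernel

end NormedField

section HermForm

variable {𝕜 m n : Type*} [RCLike 𝕜] [Fintype m] [Fintype n]

/-- The real quadratic form `x ↦ re (x* A x)` of a square matrix; for Hermitian `A` the number
`x* A x` is itself real. -/
noncomputable def hermForm (A : Matrix n n 𝕜) (x : n → 𝕜) : ℝ :=
  RCLike.re (star x ⬝ᵥ A *ᵥ x)

theorem hermForm_zero (A : Matrix n n 𝕜) : hermForm A 0 = 0 := by
  simp [hermForm]

theorem hermForm_neg (A : Matrix n n 𝕜) : hermForm (-A) = -hermForm A := by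
  funext x
  simp [hermForm, neg_mulVec]

theorem hermForm_add (A B : Matrix n n 𝕜) (x : n → 𝕜) :
    hermForm (A + B) x = hermForm A x + hermForm B x := by
  simp [hermForm, add_mulVec]

theorem hermForm_mul_mul_conjTranspose (A : Matrix m m 𝕜) (B : Matrix n m 𝕜) (x : n → 𝕜) :
    hermForm (B * A * Bᴴ) x = hermForm A (Bᴴ *ᵥ x) := by
  rw [hermForm, hermForm, star_mulVec, conjTranspose_conjTranspose, ← dotProduct_mulVec,
    mulVec_mulVec, mulVec_mulVec, Matrix.mul_assoc]

theorem hermForm_diagonal [DecidableEq n] (d : n → ℝ) (x : n → 𝕜) :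
    hermForm (diagonal (RCLike.ofReal ∘ d)) x = ∑ i, d i * ‖x i‖ ^ 2 := by
  simp only [hermForm, dotProduct, mulVec_diagonal, map_sum]
  refine Finset.sum_congr rfl fun i _ => ?_
  rw [mul_left_comm, Pi.star_apply, RCLike.star_def, RCLike.conj_mul, Function.comp_apply,
    RCLike.re_ofReal_mul]
  norm_cast

theorem hermForm_single [DecidableEq n] (k : n) (x : n → 𝕜) :
    hermForm (single k k 1) x = ‖x k‖ ^ 2 := by
  have mulVec_eq : single k k 1 *ᵥ x = Pi.single k (x k) := by
    rw [single_mulVec, one_mul]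
    rfl
  rw [hermForm, mulVec_eq, dotProduct_single, Pi.star_apply, RCLike.star_def, RCLike.conj_mul]
  norm_cast

theorem hermForm_add_smul_of_mulVec_eq_zero {A : Matrix n n 𝕜} (hA : A.IsHermitian) {x : n → 𝕜}
    (hx : A *ᵥ x = 0) (v : n → 𝕜) (c : 𝕜) : hermForm A (v + c • x) = hermForm A v := by
  have star_dotProduct : star x ⬝ᵥ A *ᵥ v = 0 := by
    rw [dotProduct_mulVec, ← hA.eq, ← star_mulVec, hx, star_zero, zero_dotProduct]
  simp [hermForm, mulVec_add, mulVec_smul, hx, star_dotProduct]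

end HermForm

section Inertia

variable {𝕜 n : Type*} [RCLike 𝕜] [Fintype n] [DecidableEq n] {A : Matrix n n 𝕜}

/-- **Sylvester's law of inertia** for congruence by an invertible matrix. -/
theorem posIndex_hermForm_mul_mul_conjTranspose {U : Matrix n n 𝕜} (hU : IsUnit U)
    (A : Matrix n n 𝕜) : posIndex 𝕜 (hermForm (U * A * Uᴴ)) = posIndex 𝕜 (hermForm A) := by
  apply le_antisymm
  · exact posIndex_le_posIndex_of_le_comp (hermForm_zero A) Uᴴ.mulVecLin fun x =>
      (hermForm_mul_mul_conjTranspose A U x).le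
  · obtain ⟨B, hB⟩ : ∃ B, Uᴴ * B = 1 := hU.star.exists_right_inv
    refine posIndex_le_posIndex_of_le_comp (hermForm_zero _) B.mulVecLin fun x => ?_
    simp [hermForm_mul_mul_conjTranspose, hB]

theorem posIndex_hermForm_diagonal (d : n → ℝ) :
    posIndex 𝕜 (hermForm (diagonal (RCLike.ofReal ∘ d : n → 𝕜))) = Fintype.card {i // 0 < d i} := by
  rw [funext (hermForm_diagonal d), posIndex_weighted_sum_sq, Fintype.card_eq_nat_card,
    ← Nat.card_coe_set_eq, Set.coe_ofPred]

theorem exists_isUnit_eq_mul_diagonal_mul_conjTranspose (hA : A.IsHermitian) :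
    ∃ U : Matrix n n 𝕜, IsUnit U ∧ A = U * diagonal (RCLike.ofReal ∘ hA.eigenvalues) * Uᴴ :=
  ⟨hA.eigenvectorUnitary, Unitary.isUnit_coe, hA.spectral_theorem⟩

theorem posIndex_hermForm (hA : A.IsHermitian) :
    posIndex 𝕜 (hermForm A) = Fintype.card {i // 0 < hA.eigenvalues i} := by
  obtain ⟨U, hU, hAU⟩ := exists_isUnit_eq_mul_diagonal_mul_conjTranspose hA
  conv_lhs => rw [hAU]
  rw [posIndex_hermForm_mul_mul_conjTranspose hU, posIndex_hermForm_diagonal]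

theorem posIndex_neg_hermForm (hA : A.IsHermitian) :
    posIndex 𝕜 (-hermForm A) = Fintype.card {i // hA.eigenvalues i < 0} := by
  obtain ⟨U, hU, hAU⟩ := exists_isUnit_eq_mul_diagonal_mul_conjTranspose hA
  have neg_eq : -A = U * diagonal (RCLike.ofReal ∘ (-hA.eigenvalues)) * Uᴴ := by
    conv_lhs => rw [hAU]
    rw [← neg_mul, ← mul_neg, diagonal_neg]
    congr 3
    funext i
    simp
  rw [← hermForm_neg, neg_eq, posIndex_hermForm_mul_mul_conjTranspose hU,
    posIndex_hermForm_diagonal]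
  simp only [Pi.neg_apply, neg_pos]

/-- `HasInertia A p q` says that `A` is Hermitian with exactly `p` positive and `q` negative
eigenvalues, counted with multiplicity. -/
def HasInertia (A : Matrix n n 𝕜) (p q : ℕ) : Prop :=
  ∃ hA : A.IsHermitian,
    Fintype.card {i // 0 < hA.eigenvalues i} = p ∧ Fintype.card {i // hA.eigenvalues i < 0} = q

theorem hasInertia_iff_posIndex {p q : ℕ} :
    HasInertia A p q ↔
      A.IsHermitian ∧ posIndex 𝕜 (hermForm A) = p ∧ posIndex 𝕜 (-hermForm A) = q := by
  constructor
  · rintro ⟨hA, hp, hq⟩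
    exact ⟨hA, (posIndex_hermForm hA).trans hp, (posIndex_neg_hermForm hA).trans hq⟩
  · rintro ⟨hA, hp, hq⟩
    exact ⟨hA, (posIndex_hermForm hA).symm.trans hp,
      (posIndex_neg_hermForm hA).symm.trans hq⟩

namespace HasInertia

variable {p q : ℕ}

theorem neg (h : HasInertia A p q) : HasInertia (-A) q p := by
  obtain ⟨hA, hp, hq⟩ := hasInertia_iff_posIndex.mp h
  refine hasInertia_iff_posIndex.mpr ⟨hA.neg, ?_, ?_⟩
  · rwa [hermForm_neg]
  · rwa [hermForm_neg, neg_neg]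

theorem add_single (h : HasInertia A p q) {x : n → 𝕜} (hx : A *ᵥ x = 0) {k : n} (hk : x k ≠ 0) :
    HasInertia (A + single k k 1) (p + 1) q := by
  obtain ⟨hA, rfl, rfl⟩ := hasInertia_iff_posIndex.mp h
  have hermitian : (A + single k k 1).IsHermitian := hA.add (by simp [IsHermitian])
  have hermForm_eq : hermForm (A + single k k 1) =
      fun v => hermForm A v + ‖(LinearMap.proj k : (n → 𝕜) →ₗ[𝕜] 𝕜) v‖ ^ 2 := by
    funext v
    rw [hermForm_add, hermForm_single, LinearMap.proj_apply]
  have hx' := hermForm_add_smul_of_mulVec_eq_zero hA hx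
  rw [hasInertia_iff_posIndex, hermForm_eq]
  exact ⟨hermitian, posIndex_add_norm_sq (hermForm_zero A) hx' hk,
    posIndex_neg_add_norm_sq (hermForm_zero A) hx' hk⟩

theorem exists_mulVec_eq_zero (h : HasInertia A p q) (hpq : p + q < Fintype.card n) :
    ∃ x ≠ 0, A *ᵥ x = 0 := by
  obtain ⟨hA, rfl, rfl⟩ := h
  obtain ⟨i, hi⟩ : ∃ i, hA.eigenvalues i = 0 := by
    by_contra! hne
    have card_nonpos :
        Fintype.card {i // ¬ 0 < hA.eigenvalues i} = Fintype.card {i // hA.eigenvalues i < 0} :=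
      Fintype.card_congr (Equiv.subtypeEquivRight fun i => not_lt.trans (hne i).le_iff_lt)
    rw [Fintype.card_subtype_compl] at card_nonpos
    lia
  refine ⟨hA.eigenvectorBasis i, ?_, ?_⟩
  · simpa using hA.eigenvectorBasis.orthonormal.ne_zero i
  · rw [hA.mulVec_eigenvectorBasis, hi, zero_smul]

theorem exists_add_isDiag_succ (h : HasInertia A p q) (hpq : p + q < Fintype.card n) :
    ∃ D : Matrix n n 𝕜, D.IsDiag ∧ HasInertia (A + D) (p + 1) q := by
  obtain ⟨x, hx0, hx⟩ := h.exists_mulVec_eq_zero hpq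
  obtain ⟨k, hk⟩ := Function.ne_iff.mp hx0
  exact ⟨single k k 1, diagonal_single k (1 : 𝕜) ▸ isDiag_diagonal _, h.add_single hx hk⟩

theorem exists_add_isDiag_add (h : HasInertia A p q) (s : ℕ)
    (hpq : p + s + q ≤ Fintype.card n) :
    ∃ D : Matrix n n 𝕜, D.IsDiag ∧ HasInertia (A + D) (p + s) q := by
  induction s with
  | zero => exact ⟨0, isDiag_zero, by simpa using h⟩
  | succ s ih =>
    obtain ⟨D, hD, hAD⟩ := ih (by lia)
    obtain ⟨E, hE, hADE⟩ := hAD.exists_add_isDiag_succ (by lia)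
    exact ⟨D + E, hD.add hE, by rwa [← add_assoc]⟩

end HasInertia

theorem northeast_lemma_general {p q s t : ℕ} (h : HasInertia A p q)
    (hst : (p + s) + (q + t) ≤ Fintype.card n) :
    ∃ D : Matrix n n 𝕜, D.IsDiag ∧ HasInertia (A + D) (p + s) (q + t) := by
  obtain ⟨D, hD, hAD⟩ := h.exists_add_isDiag_add s (by lia)
  obtain ⟨E, hE, hADE⟩ := hAD.neg.exists_add_isDiag_add t (by lia)
  have neg_add : -(-(A + D) + E) = A + (D - E) := by abel
  exact ⟨D - E, hD.sub hE, neg_add ▸ hADE.neg⟩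

end Inertia

/-- Northeast Lemma: if `(p, q)` is in the inertia set of `G`, then so is
`(p + s, q + t)` for all nonnegative `s, t` with `(p + s) + (q + t) ≤ n`. -/
theorem northeast_lemma
    {V : Type*} [Fintype V] [DecidableEq V] (G : SimpleGraph V)
    (A : Matrix V V ℂ) (hA : A.IsHermitian)
    (hpat : ∀ i j : V, i ≠ j → (A i j ≠ 0 ↔ G.Adj i j))
    (p q : ℕ) (hp : posEigCount hA = p) (hq : negEigCount hA = q)
    (s t : ℕ) (hst : (p + s) + (q + t) ≤ Fintype.card V) :
    ∃ A' : Matrix V V ℂ, ∃ hA' : A'.IsHermitian,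
      (∀ i j : V, i ≠ j → (A' i j ≠ 0 ↔ G.Adj i j)) ∧
      posEigCount hA' = p + s ∧ negEigCount hA' = q + t := by
  obtain ⟨D, hD, hA', hp', hq'⟩ := northeast_lemma_general ⟨hA, hp, hq⟩ hst
  refine ⟨A + D, hA', fun i j hij => ?_, hp', hq'⟩
  rw [Matrix.add_apply, hD hij, add_zero]
  exact hpat i j hij
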